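/- Let m ≥ 2 be an integer, n = 2^{2m−1} − 1, and let β be a primitive n-th root of unity in F_{4^{2m−1}}; let m_{β^i}(x) denote the minimal polynomial of β^i over F_4. Then the cyclic code of length 2n over F_4 with generator polynomial (x−1) m_β(x)^2 m_{β^3}(x) has dimension 2n − 6m + 2 and minimum distance exactly 6. -/

import Mathlib

open Polynomial

/-- The cyclic code of length `N` over the field `F` generated by the polynomial `g`.
Codewords are identified with the representatives of degree `< N` of the elements of the
ideal generated by `g` in `F[x]/(x^N - 1)`; equivalently, a polynomial `c` of degree `< N`
is a codeword iff `c ∈ (g, x^N - 1)` as an ideal of `F[x]`. -/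
noncomputable def cyclicCode (F : Type*) [Field F] (N : ℕ) (g : Polynomial F) :
    Submodule F (Polynomial F) :=
  Polynomial.degreeLT F N ⊓
    Submodule.restrictScalars F (Ideal.span ({g, Polynomial.X ^ N - 1} : Set (Polynomial F)))

/-- The minimum distance (equivalently, the minimum Hamming weight of a nonzero codeword,
a codeword being identified with its coefficient vector) of a linear code of polynomials. -/
noncomputable def minDist {F : Type*} [Field F] (C : Submodule F (Polynomial F)) : ℕ :=
  sInf {w | ∃ c ∈ C, c ≠ 0 ∧ c.support.card = w}

/-!
In characteristic `2` the modulus `x^{2n} - 1` is `(x^n - 1)^2`, so a word `c` of length `2n` is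
`s + (x^n - 1) q` with `s` and `q` of length `n`. Reduction modulo `x^n - 1` does not increase the
weight, so `c` is at least as heavy as `s`; if `s = 0`, then `c` has twice the weight of `q`. For a
generator `h u` with `u ∣ h ∣ x^n - 1` and `n` odd, `h` divides `s`, and `u` divides `q` if `s = 0`,
so both cases are governed by cyclic codes of the odd length `n`. For `u = m_β` and
`h = (x - 1) m_β m_{β^3}` these have zeros `β, β^2` and `1, β, β^2, β^3, β^4`, because squaring is a
power of the Frobenius of the ground field on the `n`-th roots of unity, and the BCH bound gives
weight at least `6` both times. The bound is attained because `1 + β = β^j` for some `j`, so that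
`(x^n - 1)(1 + x + x^j)` is a codeword.
-/

section Weight

variable {R : Type*}

theorem card_support_X_pow_sub_one_mul [Ring R] {n : ℕ} {f : R[X]} (hf : f.degree < n) :
    ((X ^ n - 1) * f).support.card = 2 * f.support.card := by
  classical
  have hcoeff {i : ℕ} (hi : n ≤ i) : f.coeff i = 0 :=
    coeff_eq_zero_of_degree_lt (hf.trans_le (by exact_mod_cast hi))
  have hsupp : ((X ^ n - 1) * f).support = f.support ∪ f.support.image (· + n) := by
    ext i
    simp only [Finset.mem_union, Finset.mem_image, mem_support_iff, sub_mul, one_mul, coeff_sub,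
      coeff_X_pow_mul']
    split_ifs with hi
    · rw [hcoeff hi, sub_zero]
      refine ⟨fun h => .inr ⟨i - n, h, Nat.sub_add_cancel hi⟩, ?_⟩
      rintro (h | ⟨j, hj, rfl⟩)
      · exact absurd rfl h
      · rwa [Nat.add_sub_cancel]
    · rw [zero_sub, neg_ne_zero]
      exact ⟨.inl, by rintro (h | ⟨j, -, rfl⟩) <;> [exact h; omega]⟩
  have hdisj : Disjoint f.support (f.support.image (· + n)) := by
    rw [Finset.disjoint_right]
    rintro i hi
    obtain ⟨j, -, rfl⟩ := Finset.mem_image.1 hi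
    exact notMem_support_iff.2 (hcoeff (Nat.le_add_left n j))
  rw [hsupp, Finset.card_union_of_disjoint hdisj,
    Finset.card_image_of_injective _ (add_left_injective n), two_mul]

theorem monic_X_pow_sub_one [Ring R] {n : ℕ} (hn : n ≠ 0) : (X ^ n - 1 : R[X]).Monic := by
  simpa only [map_one] using monic_X_pow_sub_C (1 : R) hn

theorem degree_X_pow_sub_one [Ring R] [Nontrivial R] {n : ℕ} (hn : n ≠ 0) :
    (X ^ n - 1 : R[X]).degree = n := by
  simpa only [map_one] using degree_X_pow_sub_C (Nat.pos_of_ne_zero hn) (1 : R)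

theorem monomial_modByMonic_X_pow_sub_one [CommRing R] {n : ℕ} (hn : n ≠ 0) (i : ℕ) (a : R) :
    monomial i a %ₘ (X ^ n - 1) = monomial (i % n) a := by
  nontriviality R
  have hdvd : (X ^ n - 1 : R[X]) ∣ monomial i a - monomial (i % n) a := by
    have hfactor : monomial i a - monomial (i % n) a =
        C a * X ^ (i % n) * ((X ^ n) ^ (i / n) - 1) := by
      rw [mul_sub, mul_one, mul_assoc, ← pow_mul, ← pow_add, Nat.mod_add_div,
        C_mul_X_pow_eq_monomial, C_mul_X_pow_eq_monomial]
    exact hfactor ▸ (sub_one_dvd_pow_sub_one (X ^ n : R[X]) (i / n)).mul_left _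
  rw [modByMonic_eq_of_dvd_sub (monic_X_pow_sub_one hn) hdvd,
    modByMonic_eq_self_iff (monic_X_pow_sub_one hn), degree_X_pow_sub_one hn]
  exact (degree_monomial_le _ _).trans_lt (by exact_mod_cast Nat.mod_lt i (Nat.pos_of_ne_zero hn))

theorem card_support_modByMonic_X_pow_sub_one_le [CommRing R] {n : ℕ} (hn : n ≠ 0) (c : R[X]) :
    (c %ₘ (X ^ n - 1)).support.card ≤ c.support.card := by
  classical
  have hmod : c %ₘ (X ^ n - 1) = ∑ i ∈ c.support, monomial (i % n) (c.coeff i) := by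
    conv_lhs => rw [c.as_sum_support]
    change modByMonicHom (X ^ n - 1) _ = _
    rw [map_sum]
    exact Finset.sum_congr rfl fun i _ => monomial_modByMonic_X_pow_sub_one hn i _
  have hsub : (c %ₘ (X ^ n - 1)).support ⊆ c.support.image (· % n) := by
    intro k hk
    rw [mem_support_iff, hmod, finsetSum_coeff] at hk
    obtain ⟨i, hi, hik⟩ := Finset.exists_ne_zero_of_sum_ne_zero hk
    rw [coeff_monomial, ne_eq, ite_eq_right_iff, Classical.not_imp] at hik
    exact Finset.mem_image.2 ⟨i, hi, hik.1⟩
  exact (Finset.card_le_card hsub).trans Finset.card_image_le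

theorem bch_bound {A : Type*} [CommSemiring R] [CommRing A] [IsDomain A]
    [Algebra R A] [FaithfulSMul R A] {n b t : ℕ} {β : A} (hβ : IsPrimitiveRoot β n) {f : R[X]}
    (hf0 : f ≠ 0) (hfn : f.degree < n) (hz : ∀ j < t, aeval (β ^ (b + j)) f = 0) :
    t < f.support.card := by
  by_contra! ht
  let e := f.support.equivFin.symm
  have hlt (i : f.support) : (i : ℕ) < n := by
    exact_mod_cast (le_degree_of_mem_supp _ i.2).trans_lt hfn
  have hinj : Function.Injective fun k => β ^ (e k : ℕ) := fun k l hkl =>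
    e.injective (Subtype.ext (hβ.pow_inj (hlt _) (hlt _) hkl))
  have hvandermonde : (fun k => algebraMap R A (f.coeff (e k)) * (β ^ (e k : ℕ)) ^ b) = 0 := by
    refine Matrix.eq_zero_of_forall_pow_sum_mul_pow_eq_zero hinj fun j => ?_
    rw [e.sum_comp fun i : f.support =>
        algebraMap R A (f.coeff i) * (β ^ (i : ℕ)) ^ b * (β ^ (i : ℕ)) ^ (j : ℕ),
      Finset.sum_coe_sort f.support fun i =>
        algebraMap R A (f.coeff i) * (β ^ i) ^ b * (β ^ i) ^ (j : ℕ),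
      ← hz j (j.2.trans_le ht), aeval_def, eval₂_eq_sum, Polynomial.sum]
    exact Finset.sum_congr rfl fun i _ => by ring
  have hn : n ≠ 0 := Nat.ne_zero_of_lt (hlt ⟨_, natDegree_mem_support_of_nonzero hf0⟩)
  have hcoeff (i : f.support) : f.coeff i = 0 := by
    have hi := congrFun hvandermonde (e.symm i)
    simpa [hβ.ne_zero hn] using hi
  exact hf0 (leadingCoeff_eq_zero.1 (hcoeff ⟨_, natDegree_mem_support_of_nonzero hf0⟩))

end Weight

section CyclicCode

variable {F : Type*} [Field F]

theorem mem_cyclicCode_iff {N : ℕ} {g : F[X]} (hg : g ∣ X ^ N - 1) {c : F[X]} :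
    c ∈ cyclicCode F N g ↔ c.degree < N ∧ g ∣ c := by
  rw [cyclicCode, Submodule.mem_inf, mem_degreeLT, Submodule.restrictScalars_mem,
    Ideal.span_pair_eq_span_left_iff_dvd.2 hg, Ideal.mem_span_singleton]

theorem cyclicCode_eq_map_mulLeft {N : ℕ} {g : F[X]} (hg : g ∣ X ^ N - 1) (hg0 : g ≠ 0) :
    cyclicCode F N g = (degreeLT F (N - g.natDegree)).map (LinearMap.mulLeft F g) := by
  have hdeg (a : F[X]) : (g * a).degree < N ↔ a ∈ degreeLT F (N - g.natDegree) := by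
    rw [mem_degreeLT]
    obtain rfl | ha := eq_or_ne a 0
    · simp
    · rw [← natDegree_lt_iff_degree_lt (mul_ne_zero hg0 ha), ← natDegree_lt_iff_degree_lt ha,
        natDegree_mul hg0 ha]
      omega
  ext c
  rw [mem_cyclicCode_iff hg, Submodule.mem_map]
  constructor
  · rintro ⟨hc, a, rfl⟩
    exact ⟨a, (hdeg a).1 hc, rfl⟩
  · rintro ⟨a, ha, rfl⟩
    exact ⟨(hdeg a).2 ha, dvd_mul_right g a⟩

theorem finrank_cyclicCode_add_natDegree {N : ℕ} (hN : N ≠ 0) {g : F[X]} (hg : g ∣ X ^ N - 1) :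
    Module.finrank F (cyclicCode F N g) + g.natDegree = N := by
  have hX0 : (X ^ N - 1 : F[X]) ≠ 0 := (monic_X_pow_sub_one hN).ne_zero
  have hg0 : g ≠ 0 := ne_zero_of_dvd_ne_zero hX0 hg
  have hdeg : g.natDegree ≤ N := by
    simpa only [natDegree_eq_of_degree_eq_some (degree_X_pow_sub_one hN)]
      using natDegree_le_of_dvd hg hX0
  have hinj : Function.Injective (LinearMap.mulLeft F g) := mul_right_injective₀ hg0
  rw [cyclicCode_eq_map_mulLeft hg hg0,
    ← (Submodule.equivMapOfInjective _ hinj _).finrank_eq, (degreeLTEquiv F _).finrank_eq,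
    Module.finrank_fin_fun, Nat.sub_add_cancel hdeg]

end CyclicCode

section RepeatedRoot

variable {F : Type*} [Field F] [CharP F 2] {n : ℕ} {h u : F[X]}

theorem X_pow_two_mul_sub_one (n : ℕ) : (X ^ (2 * n) - 1 : F[X]) = (X ^ n - 1) * (X ^ n - 1) := by
  rw [← sq, sub_pow_char, one_pow, ← pow_mul, mul_comm]

theorem mul_dvd_X_pow_two_mul_sub_one (hh : h ∣ X ^ n - 1) (hu : u ∣ X ^ n - 1) :
    h * u ∣ X ^ (2 * n) - 1 :=
  X_pow_two_mul_sub_one (F := F) n ▸ mul_dvd_mul hh hu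

theorem X_pow_sub_one_mul_mem_cyclicCode (hn : n ≠ 0) (hh : h ∣ X ^ n - 1) (hu : u ∣ X ^ n - 1)
    {q : F[X]} (hq : q ∈ cyclicCode F n u) : (X ^ n - 1) * q ∈ cyclicCode F (2 * n) (h * u) := by
  rw [mem_cyclicCode_iff hu] at hq
  refine (mem_cyclicCode_iff (mul_dvd_X_pow_two_mul_sub_one hh hu)).2 ⟨?_, mul_dvd_mul hh hq.2⟩
  rw [degree_mul, degree_X_pow_sub_one hn, two_mul, Nat.cast_add]
  exact WithBot.add_lt_add_left (WithBot.natCast_ne_bot n) hq.1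

theorem dvd_of_mul_dvd_X_pow_sub_one_mul (hn : Odd n) (hh : h ∣ X ^ n - 1) (huh : u ∣ h) {q : F[X]}
    (hq : h * u ∣ (X ^ n - 1) * q) : u ∣ q := by
  have hsep : (X ^ n - 1 : F[X]).Separable := by
    rw [X_pow_sub_one_separable_iff, ne_eq, CharP.cast_eq_zero_iff F 2, ← even_iff_two_dvd]
    exact Nat.not_even_iff_odd.2 hn
  have hh0 : h ≠ 0 := ne_zero_of_dvd_ne_zero (monic_X_pow_sub_one hn.pos.ne').ne_zero hh
  obtain ⟨k, hk⟩ := hh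
  rw [hk] at hsep hq
  have hukq : u ∣ k * q := (mul_dvd_mul_iff_left hh0).1 (by rwa [← mul_assoc])
  exact (hsep.isCoprime.of_isCoprime_of_dvd_left huh).dvd_of_dvd_mul_left hukq

theorem le_card_support_of_mem_cyclicCode_two_mul (hn : Odd n) (hh : h ∣ X ^ n - 1) (huh : u ∣ h)
    {d : ℕ} (hdh : ∀ s ∈ cyclicCode F n h, s ≠ 0 → d ≤ s.support.card)
    (hdu : ∀ q ∈ cyclicCode F n u, q ≠ 0 → d ≤ 2 * q.support.card)
    {c : F[X]} (hc : c ∈ cyclicCode F (2 * n) (h * u)) (hc0 : c ≠ 0) : d ≤ c.support.card := by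
  have hn0 : n ≠ 0 := hn.pos.ne'
  have hu := huh.trans hh
  obtain ⟨hcdeg, hhuc⟩ := (mem_cyclicCode_iff (mul_dvd_X_pow_two_mul_sub_one hh hu)).1 hc
  have hmonic : (X ^ n - 1 : F[X]).Monic := monic_X_pow_sub_one hn0
  have hdecomp := modByMonic_add_div c (X ^ n - 1)
  set s := c %ₘ (X ^ n - 1)
  set q := c /ₘ (X ^ n - 1)
  obtain hs0 | hs0 := eq_or_ne s 0
  · rw [hs0, zero_add] at hdecomp
    have hqdeg : q.degree < n := by
      rw [← hdecomp, degree_mul, degree_X_pow_sub_one hn0, two_mul, Nat.cast_add] at hcdeg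
      exact lt_of_add_lt_add_left hcdeg
    have huq : u ∣ q := dvd_of_mul_dvd_X_pow_sub_one_mul hn hh huh (hdecomp ▸ hhuc)
    have hq0 : q ≠ 0 := right_ne_zero_of_mul (hdecomp ▸ hc0)
    rw [← hdecomp, card_support_X_pow_sub_one_mul hqdeg]
    exact hdu q ((mem_cyclicCode_iff hu).2 ⟨hqdeg, huq⟩) hq0
  · have hsdeg : s.degree < n := degree_X_pow_sub_one (R := F) hn0 ▸ degree_modByMonic_lt c hmonic
    have hhs : h ∣ s := (dvd_add_left (hh.mul_right q)).1 (hdecomp ▸ (dvd_mul_right h u).trans hhuc)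
    exact (hdh s ((mem_cyclicCode_iff hh).2 ⟨hsdeg, hhs⟩) hs0).trans
      (card_support_modByMonic_X_pow_sub_one_le hn0 c)

end RepeatedRoot

section MersenneLength

theorem orderOf_natCast_zmod_pow_sub_one {a : ℕ} (ha : 2 ≤ a) (ℓ : ℕ) :
    orderOf (a : ZMod (a ^ ℓ - 1)) = ℓ := by
  have hpow (k : ℕ) : (a : ZMod (a ^ ℓ - 1)) ^ k = 1 ↔ a ^ ℓ - 1 ∣ a ^ k - 1 := by
    rw [← ZMod.natCast_eq_zero_iff, Nat.cast_sub (Nat.one_le_pow _ _ (by omega)), Nat.cast_pow,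
      Nat.cast_one, sub_eq_zero]
  refine dvd_antisymm (orderOf_dvd_of_pow_eq_one ((hpow ℓ).2 dvd_rfl)) ?_
  have hgcd := Nat.gcd_eq_left ((hpow _).1 (pow_orderOf_eq_one (a : ZMod (a ^ ℓ - 1))))
  rw [Nat.pow_sub_one_gcd_pow_sub_one] at hgcd
  have hpow_eq := Nat.sub_one_cancel (by positivity) (by positivity) hgcd
  exact Nat.gcd_eq_left_iff_dvd.1 (Nat.pow_right_injective ha hpow_eq)

theorem coprime_three_two_pow_sub_one {ℓ : ℕ} (hℓ : Odd ℓ) : Nat.Coprime 3 (2 ^ ℓ - 1) := by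
  have hgcd := Nat.pow_sub_one_gcd_pow_sub_one 2 2 ℓ
  rwa [Nat.coprime_two_left.2 hℓ] at hgcd

theorem odd_two_pow_sub_one {ℓ : ℕ} (hℓ : ℓ ≠ 0) : Odd (2 ^ ℓ - 1) :=
  Nat.Even.sub_odd Nat.one_le_two_pow (even_two.pow_of_ne_zero hℓ) odd_one

theorem three_mul_lt_two_pow {m : ℕ} (hm : 2 ≤ m) : 3 * m < 2 ^ (2 * m - 1) := by
  induction m, hm using Nat.le_induction with
  | base => norm_num
  | succ k hk ih =>
    rw [show 2 * (k + 1) - 1 = 2 * k - 1 + 2 by omega, pow_add]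
    omega

theorem pow_two_pow_mod {M : Type*} [Monoid M] {ℓ : ℕ} {x : M} (hx : x ^ 2 ^ ℓ = x) (a : ℕ) :
    x ^ 2 ^ (a % ℓ) = x ^ 2 ^ a := by
  have hperiodic : Function.IsPeriodicPt (fun y : M => y ^ 2) ℓ x := by
    simpa only [Function.IsPeriodicPt, Function.IsFixedPt, pow_iterate] using hx
  simpa only [pow_iterate] using hperiodic.iterate_mod_apply a

theorem exists_one_add_eq_pow {K : Type*} [CommRing K] [IsDomain K] [CharP K 2] {ℓ : ℕ} (hℓ : 1 < ℓ)
    {β : K} (hβ : IsPrimitiveRoot β (2 ^ ℓ - 1)) : ∃ j, 1 < j ∧ j < 2 ^ ℓ - 1 ∧ 1 + β = β ^ j := by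
  have hn : 1 < 2 ^ ℓ - 1 := by have := Nat.pow_le_pow_right two_pos hℓ; omega
  have : NeZero (2 ^ ℓ - 1) := ⟨by omega⟩
  have hsum0 : 1 + β ≠ 0 := fun h => hβ.ne_one hn (CharTwo.add_eq_zero.1 h).symm
  have hsum_pow : (1 + β) ^ (2 ^ ℓ - 1) = 1 := by
    refine mul_right_cancel₀ hsum0 ?_
    rw [← pow_succ, Nat.sub_add_cancel Nat.one_le_two_pow, add_pow_char_pow, one_pow, one_mul,
      ← Nat.sub_add_cancel (Nat.one_le_two_pow (n := ℓ)), pow_succ, hβ.pow_eq_one, one_mul]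
  obtain ⟨j, hjn, hj⟩ := hβ.eq_pow_of_pow_eq_one hsum_pow
  have hj0 : j ≠ 0 := by
    rintro rfl
    exact hβ.ne_zero (by omega) (by simpa using hj)
  have hj1 : j ≠ 1 := by
    rintro rfl
    simp at hj
  exact ⟨j, by omega, hjn, hj.symm⟩

end MersenneLength

section Conjugates

variable {F K : Type*} [Field F] [CommRing K] [Algebra F K]

theorem minpoly_dvd_X_pow_sub_one {n : ℕ} {x : K} (hx : x ^ n = 1) : minpoly F x ∣ X ^ n - 1 :=
  minpoly.dvd F x (by simp [hx])

theorem isCoprime_minpoly_iff [IsDomain K] {x : K} (hx : IsIntegral F x) {p : F[X]} :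
    IsCoprime (minpoly F x) p ↔ aeval x p ≠ 0 := by
  rw [(minpoly.irreducible hx).coprime_iff_not_dvd, minpoly.dvd_iff]

variable [Fintype F] {r ℓ : ℕ}

theorem aeval_pow_card_pow_eq_zero {x : K} {p : F[X]} (hx : aeval x p = 0) (k : ℕ) :
    aeval (x ^ Fintype.card F ^ k) p = 0 := by
  have hfrob := aeval_algHom_apply (FiniteField.frobeniusAlgHom F K ^ k) x p
  rwa [hx, map_zero, AlgHom.coe_pow, FiniteField.coe_frobeniusAlgHom, pow_iterate] at hfrob

theorem aeval_sq_eq_zero (hF : Fintype.card F = 2 ^ r) (hr : r.Coprime ℓ) (hℓ : 1 < ℓ) {x : K}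
    (hx : x ^ (2 ^ ℓ - 1) = 1) {p : F[X]} (hp : aeval x p = 0) : aeval (x ^ 2) p = 0 := by
  obtain ⟨k, -, hk⟩ := Nat.exists_mul_mod_eq_one_of_coprime hr hℓ
  have hxℓ : x ^ 2 ^ ℓ = x := by
    rw [← Nat.sub_add_cancel (Nat.one_le_two_pow (n := ℓ)), pow_succ, hx, one_mul]
  have hsq : x ^ Fintype.card F ^ k = x ^ 2 := by
    rw [hF, ← pow_mul, ← pow_two_pow_mod hxℓ, hk, pow_one]
  exact hsq ▸ aeval_pow_card_pow_eq_zero hp k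

variable [IsDomain K]

theorem natDegree_minpoly_of_isPrimitiveRoot {n : ℕ} (hn : (Fintype.card F).Coprime n) {x : K}
    (hx : IsPrimitiveRoot x n) : (minpoly F x).natDegree = orderOf (Fintype.card F : ZMod n) := by
  obtain ⟨p, hchar⟩ := CharP.exists F
  obtain ⟨f, hp, hF⟩ := FiniteField.card F p
  have : Fact p.Prime := ⟨hp⟩
  have hpn : p.Coprime n := (Nat.coprime_pow_left_iff f.pos p n).1 (hF ▸ hn)
  have hn0 : 0 < n := by
    refine Nat.pos_of_ne_zero ?_
    rintro rfl
    exact hp.ne_one ((Nat.coprime_zero_right p).1 hpn)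
  have hdvd : minpoly F x ∣ cyclotomic n F := by
    refine minpoly.dvd F x ?_
    rw [aeval_def, eval₂_eq_eval_map, map_cyclotomic]
    exact hx.isRoot_cyclotomic hn0
  rw [natDegree_of_dvd_cyclotomic_of_irreducible hF hpn hdvd
      (minpoly.irreducible (hx.isIntegral hn0).tower_top),
    ← orderOf_units, ZMod.coe_unitOfCoprime, hF]

theorem natDegree_minpoly_of_card_eq_two_pow (hF : Fintype.card F = 2 ^ r) (hr : r.Coprime ℓ)
    (hℓ : ℓ ≠ 0) {x : K} (hx : IsPrimitiveRoot x (2 ^ ℓ - 1)) : (minpoly F x).natDegree = ℓ := by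
  have horder := orderOf_natCast_zmod_pow_sub_one le_rfl ℓ
  have hcop : (Fintype.card F).Coprime (2 ^ ℓ - 1) :=
    hF ▸ (Nat.coprime_two_left.2 (odd_two_pow_sub_one hℓ)).pow_left r
  rw [natDegree_minpoly_of_isPrimitiveRoot hcop hx, hF, Nat.cast_pow,
    Nat.Coprime.orderOf_pow (horder.symm ▸ hr.symm), horder]

end Conjugates

section CodewordWeights

variable {F K : Type*} [Field F] [Field K] [Algebra F K] {ℓ : ℕ} {β : K}

theorem exists_aeval_eq_zero_card_support_eq_three [CharP F 2] (hℓ : 1 < ℓ)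
    (hβ : IsPrimitiveRoot β (2 ^ ℓ - 1)) :
    ∃ t : F[X], t.degree < (2 ^ ℓ - 1 : ℕ) ∧ aeval β t = 0 ∧ t.support.card = 3 := by
  have : CharP K 2 := charP_of_injective_algebraMap (algebraMap F K).injective 2
  obtain ⟨j, h1j, hjn, hj⟩ := exists_one_add_eq_pow hℓ hβ
  refine ⟨C 1 * X ^ 0 + C 1 * X ^ 1 + C 1 * X ^ j, ?_, ?_,
    card_support_trinomial zero_lt_one h1j one_ne_zero one_ne_zero one_ne_zero⟩
  · refine degree_le_natDegree.trans_lt ?_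
    rw [← trinomial_def, trinomial_natDegree zero_lt_one h1j one_ne_zero]
    exact_mod_cast hjn
  · simpa [hj] using CharTwo.add_self_eq_zero (β ^ j)

variable [Fintype F] {r : ℕ}

theorem two_lt_card_support_of_aeval_eq_zero (hF : Fintype.card F = 2 ^ r) (hr : r.Coprime ℓ)
    (hℓ : 1 < ℓ) (hβ : IsPrimitiveRoot β (2 ^ ℓ - 1)) {f : F[X]} (hf0 : f ≠ 0)
    (hfn : f.degree < (2 ^ ℓ - 1 : ℕ)) (hf : aeval β f = 0) : 2 < f.support.card := by
  refine bch_bound (b := 1) hβ hf0 hfn fun j hj => ?_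
  interval_cases j
  · rwa [pow_one]
  · exact aeval_sq_eq_zero hF hr hℓ hβ.pow_eq_one hf

theorem three_lt_card_support_of_aeval_eq_zero (hF : Fintype.card F = 2 ^ r) (hr : r.Coprime ℓ)
    (hℓ : 1 < ℓ) (hβ : IsPrimitiveRoot β (2 ^ ℓ - 1)) {f : F[X]} (hf0 : f ≠ 0)
    (hfn : f.degree < (2 ^ ℓ - 1 : ℕ)) (hf : aeval β f = 0) (hf3 : aeval (β ^ 3) f = 0) :
    3 < f.support.card := by
  refine bch_bound (b := 1) hβ hf0 hfn fun j hj => ?_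
  interval_cases j
  · rwa [pow_one]
  · exact aeval_sq_eq_zero hF hr hℓ hβ.pow_eq_one hf
  · exact hf3

theorem five_lt_card_support_of_aeval_eq_zero (hF : Fintype.card F = 2 ^ r) (hr : r.Coprime ℓ)
    (hℓ : 1 < ℓ) (hβ : IsPrimitiveRoot β (2 ^ ℓ - 1)) {f : F[X]} (hf0 : f ≠ 0)
    (hfn : f.degree < (2 ^ ℓ - 1 : ℕ)) (hf : aeval β f = 0) (hf3 : aeval (β ^ 3) f = 0)
    (hf1 : f.eval 1 = 0) : 5 < f.support.card := by
  have hf2 : aeval (β ^ 2) f = 0 := aeval_sq_eq_zero hF hr hℓ hβ.pow_eq_one hf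
  refine bch_bound (b := 0) hβ hf0 hfn fun j hj => ?_
  interval_cases j
  · rw [pow_zero, ← map_one (algebraMap F K), aeval_algebraMap_apply_eq_algebraMap_eval, hf1,
      map_zero]
  · rwa [pow_one]
  · exact hf2
  · exact hf3
  · rw [zero_add, show 4 = 2 * 2 from rfl, pow_mul]
    exact aeval_sq_eq_zero hF hr hℓ (by rw [pow_right_comm, hβ.pow_eq_one, one_pow]) hf2

theorem aeval_pow_three_minpoly_ne_zero (hF : Fintype.card F = 2 ^ r) (hr : r.Coprime ℓ)
    (hℓ : 1 < ℓ) (hβ : IsPrimitiveRoot β (2 ^ ℓ - 1)) : aeval (β ^ 3) (minpoly F β) ≠ 0 := by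
  have : CharP F 2 := charP_of_card_eq_prime_pow hF
  obtain ⟨t, htn, ht, ht_card⟩ := exists_aeval_eq_zero_card_support_eq_three (F := F) hℓ hβ
  intro h
  have ht0 : t ≠ 0 := by
    rintro rfl
    simp at ht_card
  have ht3 : aeval (β ^ 3) t = 0 := aeval_eq_zero_of_dvd_aeval_eq_zero (minpoly.dvd F β ht) h
  exact (three_lt_card_support_of_aeval_eq_zero hF hr hℓ hβ ht0 htn ht ht3).ne' ht_card

theorem X_sub_one_mul_minpoly_mul_minpoly_dvd (hF : Fintype.card F = 2 ^ r) (hr : r.Coprime ℓ)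
    (hℓ : 1 < ℓ) (hodd : Odd ℓ) (hβ : IsPrimitiveRoot β (2 ^ ℓ - 1)) :
    (X - 1) * minpoly F β * minpoly F (β ^ 3) ∣ X ^ (2 ^ ℓ - 1) - 1 := by
  have hn : 1 < 2 ^ ℓ - 1 := by have := Nat.pow_le_pow_right two_pos hℓ; omega
  have hβ3 := hβ.pow_of_coprime 3 (coprime_three_two_pow_sub_one hodd)
  have hint : IsIntegral F β := (hβ.isIntegral (by omega)).tower_top
  have hcop1 : IsCoprime (minpoly F β) (X - 1) :=
    (isCoprime_minpoly_iff hint).2 (by simpa [sub_eq_zero] using hβ.ne_one hn)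
  have hcop3 : IsCoprime (minpoly F (β ^ 3)) ((X - 1) * minpoly F β) := by
    rw [isCoprime_minpoly_iff (hint.pow 3), map_mul]
    exact mul_ne_zero (by simpa [sub_eq_zero] using hβ3.ne_one hn)
      (aeval_pow_three_minpoly_ne_zero hF hr hℓ hβ)
  exact hcop3.symm.mul_dvd
    (hcop1.symm.mul_dvd (sub_one_dvd_pow_sub_one X _) (minpoly_dvd_X_pow_sub_one hβ.pow_eq_one))
    (minpoly_dvd_X_pow_sub_one hβ3.pow_eq_one)

theorem natDegree_X_sub_one_mul_minpoly_sq_mul_minpoly (hF : Fintype.card F = 2 ^ r)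
    (hr : r.Coprime ℓ) (hℓ : 1 < ℓ) (hodd : Odd ℓ) (hβ : IsPrimitiveRoot β (2 ^ ℓ - 1)) :
    ((X - 1) * minpoly F β ^ 2 * minpoly F (β ^ 3)).natDegree = 3 * ℓ + 1 := by
  have hβ3 := hβ.pow_of_coprime 3 (coprime_three_two_pow_sub_one hodd)
  have hn : 0 < 2 ^ ℓ - 1 := (odd_two_pow_sub_one (by omega)).pos
  have hint : IsIntegral F β := (hβ.isIntegral hn).tower_top
  have hX : (X - 1 : F[X]).Monic := by simpa only [map_one] using monic_X_sub_C (1 : F)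
  have hM := (minpoly.monic hint).pow 2
  rw [(hX.mul hM).natDegree_mul (minpoly.monic (hint.pow 3)), hX.natDegree_mul hM, natDegree_pow,
    natDegree_minpoly_of_card_eq_two_pow hF hr (by omega) hβ,
    natDegree_minpoly_of_card_eq_two_pow hF hr (by omega) hβ3,
    ← map_one (C : F →+* F[X]), natDegree_X_sub_C]
  ring

theorem six_le_card_support_of_mem_cyclicCode (hF : Fintype.card F = 2 ^ r) (hr : r.Coprime ℓ)
    (hℓ : 1 < ℓ) (hodd : Odd ℓ) (hβ : IsPrimitiveRoot β (2 ^ ℓ - 1)) {c : F[X]}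
    (hc : c ∈ cyclicCode F (2 * (2 ^ ℓ - 1)) ((X - 1) * minpoly F β ^ 2 * minpoly F (β ^ 3)))
    (hc0 : c ≠ 0) : 6 ≤ c.support.card := by
  have : CharP F 2 := charP_of_card_eq_prime_pow hF
  have hdvd := X_sub_one_mul_minpoly_mul_minpoly_dvd hF hr hℓ hodd hβ
  rw [show (X - 1) * minpoly F β ^ 2 * minpoly F (β ^ 3) =
    (X - 1) * minpoly F β * minpoly F (β ^ 3) * minpoly F β by ring] at hc
  refine le_card_support_of_mem_cyclicCode_two_mul (odd_two_pow_sub_one (by omega)) hdvd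
    ((dvd_mul_left _ _).mul_right _) (fun s hs hs0 => ?_) (fun q hq hq0 => ?_) hc hc0
  · obtain ⟨hsn, hsdvd⟩ := (mem_cyclicCode_iff hdvd).1 hs
    have hs13 := (dvd_mul_right _ _).trans hsdvd
    refine five_lt_card_support_of_aeval_eq_zero hF hr hℓ hβ hs0 hsn
      (minpoly.dvd_iff.1 ((dvd_mul_left _ _).trans hs13))
      (minpoly.dvd_iff.1 ((dvd_mul_left _ _).trans hsdvd)) (dvd_iff_isRoot.1 ?_)
    simpa only [map_one] using (dvd_mul_right _ _).trans hs13
  · obtain ⟨hqn, hqdvd⟩ := (mem_cyclicCode_iff (minpoly_dvd_X_pow_sub_one hβ.pow_eq_one)).1 hq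
    have := two_lt_card_support_of_aeval_eq_zero hF hr hℓ hβ hq0 hqn (minpoly.dvd_iff.1 hqdvd)
    omega

theorem exists_mem_cyclicCode_card_support_eq_six (hF : Fintype.card F = 2 ^ r) (hr : r.Coprime ℓ)
    (hℓ : 1 < ℓ) (hodd : Odd ℓ) (hβ : IsPrimitiveRoot β (2 ^ ℓ - 1)) :
    ∃ c ∈ cyclicCode F (2 * (2 ^ ℓ - 1)) ((X - 1) * minpoly F β ^ 2 * minpoly F (β ^ 3)),
      c ≠ 0 ∧ c.support.card = 6 := by
  have : CharP F 2 := charP_of_card_eq_prime_pow hF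
  have hM := minpoly_dvd_X_pow_sub_one (F := F) hβ.pow_eq_one
  obtain ⟨t, htn, ht, ht_card⟩ := exists_aeval_eq_zero_card_support_eq_three (F := F) hℓ hβ
  have hcard : ((X ^ (2 ^ ℓ - 1) - 1) * t).support.card = 6 := by
    rw [card_support_X_pow_sub_one_mul htn, ht_card]
  refine ⟨_, ?_, ?_, hcard⟩
  · rw [show (X - 1) * minpoly F β ^ 2 * minpoly F (β ^ 3) =
      (X - 1) * minpoly F β * minpoly F (β ^ 3) * minpoly F β by ring]
    exact X_pow_sub_one_mul_mem_cyclicCode (odd_two_pow_sub_one (by omega)).pos.ne'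
      (X_sub_one_mul_minpoly_mul_minpoly_dvd hF hr hℓ hodd hβ) hM
      ((mem_cyclicCode_iff hM).2 ⟨htn, minpoly.dvd F β ht⟩)
  · intro h0
    simp [h0] at hcard

end CodewordWeights

theorem statement17_general {F K : Type*} [Field F] [Fintype F] [Field K] [Algebra F K] {r ℓ : ℕ}
    (hF : Fintype.card F = 2 ^ r) (hr : r.Coprime ℓ) (hℓ : 1 < ℓ) (hodd : Odd ℓ)
    {β : K} (hβ : IsPrimitiveRoot β (2 ^ ℓ - 1)) :
    Module.finrank F
        (cyclicCode F (2 * (2 ^ ℓ - 1)) ((X - 1) * minpoly F β ^ 2 * minpoly F (β ^ 3))) +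
      (3 * ℓ + 1) = 2 * (2 ^ ℓ - 1) ∧
    minDist (cyclicCode F (2 * (2 ^ ℓ - 1)) ((X - 1) * minpoly F β ^ 2 * minpoly F (β ^ 3))) =
      6 := by
  constructor
  · have : CharP F 2 := charP_of_card_eq_prime_pow hF
    have hn : 2 ^ ℓ - 1 ≠ 0 := (odd_two_pow_sub_one (by omega)).pos.ne'
    have hdvd := mul_dvd_X_pow_two_mul_sub_one
      (X_sub_one_mul_minpoly_mul_minpoly_dvd hF hr hℓ hodd hβ)
      (minpoly_dvd_X_pow_sub_one (F := F) hβ.pow_eq_one)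
    rw [← natDegree_X_sub_one_mul_minpoly_sq_mul_minpoly hF hr hℓ hodd hβ]
    exact finrank_cyclicCode_add_natDegree (by omega) (.trans (dvd_of_eq (by ring)) hdvd)
  · refine IsLeast.csInf_eq ⟨exists_mem_cyclicCode_card_support_eq_six hF hr hℓ hodd hβ, ?_⟩
    rintro _ ⟨c, hc, hc0, rfl⟩
    exact six_le_card_support_of_mem_cyclicCode hF hr hℓ hodd hβ hc hc0

/-- for `m ≥ 2`, `n = 2^{2m-1} - 1` and `β` a primitive `n`-th root of
unity in `F_{4^{2m-1}}`, the cyclic code of length `2n` over `F_4` with generator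
polynomial `(x-1) m_β(x)^2 m_{β³}(x)` has dimension `2n - 6m + 2` and minimum distance
exactly `6`. -/
theorem statement17 {F K : Type*} [Field F] [Fintype F] [Field K] [Fintype K] [Algebra F K]
    (hF : Fintype.card F = 4)
    (m : ℕ) (hm : 2 ≤ m) (hK : Fintype.card K = 4 ^ (2 * m - 1))
    (n : ℕ) (hn : n = 2 ^ (2 * m - 1) - 1)
    (β : K) (hβ : IsPrimitiveRoot β n) :
    Module.finrank F
        (cyclicCode F (2 * n)
          ((X - 1) * (minpoly F β) ^ 2 * minpoly F (β ^ 3))) =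
      2 * n - 6 * m + 2 ∧
    minDist (cyclicCode F (2 * n)
        ((X - 1) * (minpoly F β) ^ 2 * minpoly F (β ^ 3))) = 6 := by
  obtain ⟨hdim, hdist⟩ := statement17_general (r := 2) hF
    (Nat.coprime_two_left.2 ⟨m - 1, by omega⟩) (by omega) ⟨m - 1, by omega⟩ (hn ▸ hβ)
  have hlarge := three_mul_lt_two_pow hm
  exact ⟨by rw [hn]; omega, hn ▸ hdist⟩
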